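/- arXiv:2311.08745 — 2 statements merged into one kernel-verified Lean document; each statement's English description precedes it below -/
import Mathlib

section
/- Let γ ∈ [1/2, 1), let δ_1 > 0 and define δ_{m+1} := γ·δ_m for all m ≥ 1. For each m, let F_m : ℝ^d → ℝ be differentiable and σ_m-strongly convex (σ_m > 0) with global minimizer x*_m, and suppose the minimizers satisfy ‖x*_m − x*_{m+1}‖ ≤ δ_{m+1} for all m. Let (x_m) be a sequence of points in ℝ^d such that ‖x_1 − x*_1‖ ≤ 3δ_1 and, for each m, the approximate minimization guarantee F_m(x_{m+1}) − F_m(x*_m) ≤ σ_m·δ_m²/2 holds. Then for every m ≥ 1, ‖x_m − x*_m‖ ≤ 3δ_m. -/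
open scoped RealInnerProductSpace

/-- Proposition 4.4: along the graduated-optimization schedule `δ_{m+1} = γ δ_m` with
`γ ∈ [1/2, 1)`, if each stage's approximate minimization guarantee
`F_m(x_{m+1}) − F_m(x*_m) ≤ σ_m δ_m²/2` holds and the minimizers drift by at most
`‖x*_m − x*_{m+1}‖ ≤ δ_{m+1}`, then every stage's starting point stays in the strongly
convex region: `‖x_m − x*_m‖ ≤ 3δ_m`. -/
theorem graduated_iterates_stay_in_strongly_convex_region
    {d : ℕ} (γ : ℝ) (hγ1 : 1 / 2 ≤ γ) (hγ2 : γ < 1)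
    (δ : ℕ → ℝ) (hδ1 : 0 < δ 1)
    (hδrec : ∀ m : ℕ, 1 ≤ m → δ (m + 1) = γ * δ m)
    (F : ℕ → EuclideanSpace ℝ (Fin d) → ℝ) (σ : ℕ → ℝ)
    (hσ : ∀ m : ℕ, 1 ≤ m → 0 < σ m)
    (hdiff : ∀ m : ℕ, 1 ≤ m → Differentiable ℝ (F m))
    (hsc : ∀ m : ℕ, 1 ≤ m → ∀ x y : EuclideanSpace ℝ (Fin d),
      F m x + ⟪gradient (F m) x, y - x⟫ + σ m / 2 * ‖y - x‖ ^ 2 ≤ F m y)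
    (xs : ℕ → EuclideanSpace ℝ (Fin d))
    (hmin : ∀ m : ℕ, 1 ≤ m → ∀ z, F m (xs m) ≤ F m z)
    (hdrift : ∀ m : ℕ, 1 ≤ m → ‖xs m - xs (m + 1)‖ ≤ δ (m + 1))
    (x : ℕ → EuclideanSpace ℝ (Fin d))
    (hinit : ‖x 1 - xs 1‖ ≤ 3 * δ 1)
    (happrox : ∀ m : ℕ, 1 ≤ m → F m (x (m + 1)) - F m (xs m) ≤ σ m * δ m ^ 2 / 2) :
    ∀ m : ℕ, 1 ≤ m → ‖x m - xs m‖ ≤ 3 * δ m := by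
  have hpos : ∀ m : ℕ, 1 ≤ m → 0 < δ m := by
    intro m hm
    induction m, hm using Nat.le_induction with
    | base => exact hδ1
    | succ k hk ih =>
      rw [hδrec k hk]
      exact mul_pos (by linarith) ih
  intro m hm
  rcases Nat.lt_or_ge 1 m with h | h
  · obtain ⟨k, rfl⟩ : ∃ k, m = k + 1 := ⟨m - 1, by omega⟩
    have hk : 1 ≤ k := by omega
    have hg : gradient (F k) (xs k) = 0 := by
      have hloc : IsLocalMin (F k) (xs k) := Filter.Eventually.of_forall (hmin k hk)
      rw [gradient, hloc.fderiv_eq_zero, map_zero]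
    have h1 := hsc k hk (xs k) (x (k + 1))
    rw [hg, inner_zero_left] at h1
    have h2 := happrox k hk
    have hs := hσ k hk
    have hd := hpos k hk
    have h3 : ‖x (k + 1) - xs k‖ ^ 2 ≤ δ k ^ 2 := by
      have h4 : σ k * ‖x (k + 1) - xs k‖ ^ 2 ≤ σ k * δ k ^ 2 := by linarith
      exact le_of_mul_le_mul_left h4 hs
    have h5 : ‖x (k + 1) - xs k‖ ≤ δ k := abs_le_of_sq_le_sq h3 hd.le |> (le_abs_self _).trans
    have h6 := hdrift k hk
    have h7 := norm_sub_le_norm_sub_add_norm_sub (x (k + 1)) (xs k) (xs (k + 1))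
    have h8 := hδrec k hk
    nlinarith
  · obtain rfl : m = 1 := by omega
    exact hinit
end

section
/- Let δ ∈ ℝ and define g_δ : (0, 1] → ℝ by g_δ(x) := −log x + δ²/(2x²). Then g_δ is 1-strongly convex on (0, 1] (its second derivative g_δ''(x) = 1/x² + 3δ²/x⁴ is at least 1 for all x ∈ (0, 1]), g_δ is nonincreasing on (0, 1] (g_δ'(x) = −1/x − δ²/x³ < 0 for x ∈ (0, 1]), and g_δ attains its minimum over (0, 1] exactly at x = 1. -/
theorem log_aux (x y : ℝ) (hx : 0 < x) (hx1 : x ≤ 1) (hy : 0 < y) (hy1 : y ≤ 1) :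
    0 ≤ -Real.log y + Real.log x + (y - x) / x - (y - x) ^ 2 / 2 := by
  set h : ℝ → ℝ := fun t => -Real.log t + Real.log x + (t - x) / x - (t - x) ^ 2 / 2 with hh
  have hd : ∀ t, 0 < t → HasDerivAt h ((t - x) * (1 / (x * t) - 1)) t := by
    intro t ht
    have h1 := ((((Real.hasDerivAt_log ht.ne').neg).add_const (Real.log x)).add
      (((hasDerivAt_id t).sub_const x).div_const x)).sub
      ((((hasDerivAt_id t).sub_const x).pow 2).div_const 2)
    refine h1.congr_deriv ?_
    simp
    field_simp
    ring
  have h0 : h x = 0 := by simp [hh]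
  have key : ∀ t, 0 < t → t ≤ 1 → 0 ≤ 1 / (x * t) - 1 := by
    intro t ht ht1
    rw [sub_nonneg, le_div_iff₀ (by positivity)]
    nlinarith
  change 0 ≤ h y
  rw [← h0]
  rcases le_total x y with hxy | hxy
  · refine monotoneOn_of_deriv_nonneg (convex_Icc x y)
      (fun t ht => (hd t (lt_of_lt_of_le hx ht.1)).continuousAt.continuousWithinAt)
      (fun t ht => ?_) (fun t ht => ?_) (Set.left_mem_Icc.2 hxy) (Set.right_mem_Icc.2 hxy) hxy
    · rw [interior_Icc] at ht
      exact (hd t (hx.trans ht.1)).differentiableAt.differentiableWithinAt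
    · rw [interior_Icc] at ht
      rw [(hd t (hx.trans ht.1)).deriv]
      exact mul_nonneg (by linarith [ht.1]) (key t (hx.trans ht.1) (by linarith [ht.2]))
  · refine antitoneOn_of_deriv_nonpos (convex_Icc y x)
      (fun t ht => (hd t (lt_of_lt_of_le hy ht.1)).continuousAt.continuousWithinAt)
      (fun t ht => ?_) (fun t ht => ?_) (Set.left_mem_Icc.2 hxy) (Set.right_mem_Icc.2 hxy) hxy
    · rw [interior_Icc] at ht
      exact (hd t (hy.trans ht.1)).differentiableAt.differentiableWithinAt
    · rw [interior_Icc] at ht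
      rw [(hd t (hy.trans ht.1)).deriv]
      exact mul_nonpos_of_nonpos_of_nonneg (by linarith [ht.2])
        (key t (hy.trans ht.1) (by linarith [ht.2]))

theorem deriv_aux (δ x : ℝ) (hx : 0 < x) :
    deriv (fun z : ℝ => -Real.log z + δ ^ 2 / (2 * z ^ 2)) x = -(1 / x) - δ ^ 2 / x ^ 3 := by
  have h1 := ((Real.hasDerivAt_log hx.ne').neg).add
    ((hasDerivAt_const x (δ ^ 2)).div (((hasDerivAt_id x).pow 2).const_mul 2)
      (by simp; exact hx.ne'))
  refine (h1.congr_deriv ?_).deriv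
  simp
  field_simp
  ring

theorem sq_aux (δ x y : ℝ) (hx : 0 < x) (hy : 0 < y) :
    0 ≤ δ ^ 2 / (2 * y ^ 2) - δ ^ 2 / (2 * x ^ 2) + δ ^ 2 / x ^ 3 * (y - x) := by
  have : δ ^ 2 / (2 * y ^ 2) - δ ^ 2 / (2 * x ^ 2) + δ ^ 2 / x ^ 3 * (y - x)
      = δ ^ 2 * ((x - y) ^ 2 * (x + 2 * y)) / (2 * x ^ 3 * y ^ 2) := by
    field_simp
    ring
  rw [this]
  positivity

/-- Proposition 4.2 (cross-entropy part): the smoothed cross-entropy loss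
`g_δ(x) = −log x + δ²/(2x²)` is 1-strongly convex on `(0, 1]`
(i.e. `g_δ(y) ≥ g_δ(x) + g_δ'(x)(y − x) + (1/2)(y − x)²` there), is nonincreasing on
`(0, 1]`, and attains its minimum over `(0, 1]` exactly at `x = 1`. -/
theorem smoothed_cross_entropy_one_nice (δ : ℝ) :
    (∀ x ∈ Set.Ioc (0 : ℝ) 1, ∀ y ∈ Set.Ioc (0 : ℝ) 1,
      (fun z : ℝ => -Real.log z + δ ^ 2 / (2 * z ^ 2)) x
        + deriv (fun z : ℝ => -Real.log z + δ ^ 2 / (2 * z ^ 2)) x * (y - x)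
        + 1 / 2 * (y - x) ^ 2 ≤
      (fun z : ℝ => -Real.log z + δ ^ 2 / (2 * z ^ 2)) y) ∧
    (∀ x ∈ Set.Ioc (0 : ℝ) 1, ∀ y ∈ Set.Ioc (0 : ℝ) 1, x ≤ y →
      (fun z : ℝ => -Real.log z + δ ^ 2 / (2 * z ^ 2)) y ≤
        (fun z : ℝ => -Real.log z + δ ^ 2 / (2 * z ^ 2)) x) ∧
    (∀ x ∈ Set.Ioc (0 : ℝ) 1,
      (fun z : ℝ => -Real.log z + δ ^ 2 / (2 * z ^ 2)) 1 ≤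
        (fun z : ℝ => -Real.log z + δ ^ 2 / (2 * z ^ 2)) x) ∧
    (∀ x ∈ Set.Ioc (0 : ℝ) 1,
      (fun z : ℝ => -Real.log z + δ ^ 2 / (2 * z ^ 2)) x =
        (fun z : ℝ => -Real.log z + δ ^ 2 / (2 * z ^ 2)) 1 → x = 1) := by
  have anti : ∀ x y : ℝ, 0 < x → x ≤ y → δ ^ 2 / (2 * y ^ 2) ≤ δ ^ 2 / (2 * x ^ 2) := by
    intro x y hx hxy
    gcongr
  refine ⟨?_, ?_, ?_, ?_⟩
  · rintro x ⟨hx, hx1⟩ y ⟨hy, hy1⟩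
    rw [deriv_aux δ x hx]
    have h1 := log_aux x y hx hx1 hy hy1
    have h2 := sq_aux δ x y hx hy
    have h3 : (y - x) / x = 1 / x * (y - x) := by ring
    rw [h3] at h1
    beta_reduce
    linarith
  · rintro x ⟨hx, hx1⟩ y ⟨hy, hy1⟩ hxy
    have h1 := Real.log_le_log hx hxy
    have h2 := anti x y hx hxy
    beta_reduce
    linarith
  · rintro x ⟨hx, hx1⟩
    have h1 := Real.log_le_log hx hx1
    have h2 := anti x 1 hx hx1
    beta_reduce
    linarith
  · rintro x ⟨hx, hx1⟩ h
    by_contra hne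
    have h1 := Real.log_lt_log hx (lt_of_le_of_ne hx1 hne)
    have h2 := anti x 1 hx hx1
    beta_reduce at h
    linarith
end
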